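/- arXiv:2007.02607 — 2 statements merged into one kernel-verified Lean document; each statement's English description precedes it below -/
import Mathlib

section
/- Let u, B : ℝ³ → ℝ³ be smooth vector fields with div u = 0 and div B = 0 on ℝ³. Assume u satisfies the Navier-slip boundary condition (u₃ = ∂₃u₁ = ∂₃u₂ = 0 on ∂Ω), B satisfies the insulating boundary condition (B₁ = B₂ = 0 on ∂Ω), (ΔB)₁ = (ΔB)₂ = 0 at every point of ∂Ω, and moreover Δω × n = 0 on ∂Ω where ω = curl u (i.e. (Δ curl u)₁ = (Δ curl u)₂ = 0 at every point of ∂Ω). Then (curl)³(B × u) × n = 0 on ∂Ω; explicitly, since curl(B × u) = (u·∇)B − (B·∇)u and (curl)³(B × u) = −Δ((u·∇)B − (B·∇)u), the first and second components of Δ((u·∇)B − (B·∇)u) vanish at every point of ∂Ω. -/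
noncomputable section

open MeasureTheory

/-- Points/vectors in ℝ³, indexed by `Fin 3` (so index `0,1,2` stand for coordinates `1,2,3`). -/
abbrev V3 : Type := Fin 3 → ℝ

/-- Partial derivative in the `i`-th coordinate direction. -/
def pd (i : Fin 3) (f : V3 → ℝ) (x : V3) : ℝ := fderiv ℝ f x (Pi.single i 1)

/-- Divergence of a vector field. -/
def vdiv (u : V3 → V3) (x : V3) : ℝ :=
  pd 0 (fun y => u y 0) x + pd 1 (fun y => u y 1) x + pd 2 (fun y => u y 2) x

/-- Curl of a vector field. -/
def vcurl (u : V3 → V3) (x : V3) : V3 :=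
  ![pd 1 (fun y => u y 2) x - pd 2 (fun y => u y 1) x,
    pd 2 (fun y => u y 0) x - pd 0 (fun y => u y 2) x,
    pd 0 (fun y => u y 1) x - pd 1 (fun y => u y 0) x]

/-- Laplacian of a scalar function. -/
def lap (f : V3 → ℝ) (x : V3) : ℝ :=
  pd 0 (pd 0 f) x + pd 1 (pd 1 f) x + pd 2 (pd 2 f) x

/-- Componentwise Laplacian of a vector field. -/
def vlap (u : V3 → V3) (x : V3) : V3 := fun i => lap (fun y => u y i) x

/-- Advective derivative `(u·∇)V`. -/
def adv (u V : V3 → V3) (x : V3) : V3 := fun i =>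
  u x 0 * pd 0 (fun y => V y i) x + u x 1 * pd 1 (fun y => V y i) x +
    u x 2 * pd 2 (fun y => V y i) x

/-- Cross product in ℝ³. -/
def cross (a b : V3) : V3 :=
  ![a 1 * b 2 - a 2 * b 1, a 2 * b 0 - a 0 * b 2, a 0 * b 1 - a 1 * b 0]

/-- Dot product in ℝ³. -/
def dot (a b : V3) : ℝ := a 0 * b 0 + a 1 * b 1 + a 2 * b 2

/-- Gradient of a scalar function. -/
def grad (f : V3 → ℝ) (x : V3) : V3 := fun i => pd i f x

/-- The boundary `∂Ω = {x : x₃ = 0 or x₃ = 1}`. -/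
def onBdry (x : V3) : Prop := x 2 = 0 ∨ x 2 = 1

/-- Horizontal periodicity (period 1 in x₁ and x₂) of a scalar function. -/
def hperS (f : V3 → ℝ) : Prop :=
  (∀ x, f (x + Pi.single 0 1) = f x) ∧ (∀ x, f (x + Pi.single 1 1) = f x)

/-- Horizontal periodicity (period 1 in x₁ and x₂) of a vector field. -/
def hperV (u : V3 → V3) : Prop :=
  (∀ x, u (x + Pi.single 0 1) = u x) ∧ (∀ x, u (x + Pi.single 1 1) = u x)

/-- The unit cube `Q = [0,1]³`. -/
def Q3 : Set V3 := Set.Icc 0 1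

/-!
Reflect in the boundary planes. The Navier-slip conditions say that `u` has, to first order, the
symmetry of a reflection-invariant field (tangential components even, normal component odd), and
the insulating conditions say that `B` has, to lowest order, the opposite symmetry. The equations
`div = 0` and the conditions on `ΔB` and `Δ curl u` raise these symmetries to third order. Parities
add under `(u·∇)B` and `(B·∇)u`, so the tangential components of both terms are odd to second
order, and the Laplacian of a function that is odd to second order vanishes on the boundary.
-/

section DirDeriv

variable {E F A : Type*} [NormedAddCommGroup E] [NormedSpace ℝ E] [NormedAddCommGroup F]
  [NormedSpace ℝ F] [NormedRing A] [NormedAlgebra ℝ A] {S : Set E} {v : E}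

/-- The derivative of `f` in the direction `v`, as a function on the whole space so that it can be
iterated. It agrees with `lineDeriv` where `f` is differentiable; using `fderiv` makes `pd i` the
special case `v = eᵢ` definitionally. -/
def dirDeriv (v : E) (f : E → F) (x : E) : F := fderiv ℝ f x v

theorem contDiff_dirDeriv {n : WithTop ℕ∞} {f : E → F} (hf : ContDiff ℝ (n + 1) f) :
    ContDiff ℝ n (dirDeriv v f) :=
  (hf.fderiv_right le_rfl).clm_apply contDiff_const

theorem dirDeriv_add {f g : E → F} (hf : Differentiable ℝ f) (hg : Differentiable ℝ g) :
    dirDeriv v (f + g) = dirDeriv v f + dirDeriv v g := by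
  ext x
  simp [dirDeriv, fderiv_add (hf x) (hg x)]

theorem iterate_dirDeriv_add {n : ℕ} {f g : E → F} (hf : ContDiff ℝ n f) (hg : ContDiff ℝ n g) :
    (dirDeriv v)^[n] (f + g) = (dirDeriv v)^[n] f + (dirDeriv v)^[n] g := by
  induction n generalizing f g with
  | zero => rfl
  | succ n ih =>
    simp only [Function.iterate_succ_apply]
    rw [dirDeriv_add (hf.differentiable (by simp)) (hg.differentiable (by simp))]
    exact ih (contDiff_dirDeriv hf) (contDiff_dirDeriv hg)

theorem iterate_dirDeriv_const_smul (n : ℕ) (c : ℝ) (f : E → F) :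
    (dirDeriv v)^[n] (c • f) = c • (dirDeriv v)^[n] f := by
  have commute_smul : Function.Commute (dirDeriv v) (fun f : E → F => c • f) := fun f => by
    ext x
    simp [dirDeriv, fderiv_const_smul_field]
  exact (commute_smul.iterate_left n) f

theorem dirDeriv_mul {f g : E → A} (hf : Differentiable ℝ f) (hg : Differentiable ℝ g) :
    dirDeriv v (f * g) = dirDeriv v f * g + f * dirDeriv v g := by
  ext x
  simp [dirDeriv, fderiv_mul' (hf x) (hg x), add_comm]

theorem dirDeriv_comm {f : E → F} (hf : ContDiff ℝ 2 f) (v w : E) :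
    dirDeriv v (dirDeriv w f) = dirDeriv w (dirDeriv v f) := by
  ext x
  have fderiv_differentiable : DifferentiableAt ℝ (fderiv ℝ f) x :=
    (hf.fderiv_right (m := 1) (by norm_num)).differentiable one_ne_zero x
  have second_deriv (a b : E) :
      dirDeriv a (dirDeriv b f) x = fderiv ℝ (fderiv ℝ f) x a b := by
    change fderiv ℝ (fun y => fderiv ℝ f y b) x a = _
    simp [fderiv_clm_apply fderiv_differentiable (differentiableAt_const b)]
  rw [second_deriv, second_deriv]
  exact hf.contDiffAt.isSymmSndFDerivAt (by simp) v w

/-- `S` is invariant under translation along `v`; for a union of parallel hyperplanes this says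
that `v` is tangent to `S`. -/
def InvariantAlong (S : Set E) (v : E) : Prop := ∀ x ∈ S, ∀ t : ℝ, x + t • v ∈ S

theorem InvariantAlong.eqOn_dirDeriv_zero (hv : InvariantAlong S v) {f : E → F}
    (hf : Differentiable ℝ f) (hf0 : Set.EqOn f 0 S) : Set.EqOn (dirDeriv v f) 0 S := by
  intro x hx
  have zero_on_line : (fun t : ℝ => f (x + t • v)) = fun _ => 0 :=
    funext fun t => hf0 (hv x hx t)
  calc dirDeriv v f x = lineDeriv ℝ f x v := (hf x).lineDeriv_eq_fderiv.symm
    _ = 0 := by rw [lineDeriv, zero_on_line, deriv_const]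

end DirDeriv

section NormalParity

variable {E F A : Type*} [NormedAddCommGroup E] [NormedSpace ℝ E] [NormedAddCommGroup F]
  [NormedSpace ℝ F] [NormedRing A] [NormedAlgebra ℝ A]
  {ν : E} {S : Set E} {p q : ZMod 2} {m : ℕ} {f : E → F}

/-- On `S`, the `C^m` function `f` is even (`p = 0`) or odd (`p = 1`) to order `m` in the direction
`ν`: its `ν`-derivatives of order at most `m` and of the wrong parity vanish on `S`, as they would
if `f` were even or odd under reflection across `S`. -/
structure HasNormalParity (ν : E) (S : Set E) (p : ZMod 2) (m : ℕ) (f : E → F) : Prop where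
  contDiff : ContDiff ℝ m f
  iterate_eqOn_zero : ∀ j ≤ m, (j : ZMod 2) ≠ p → Set.EqOn ((dirDeriv ν)^[j] f) 0 S

namespace HasNormalParity

/-- The functions of a given normal parity form a vector space. -/
def submodule (ν : E) (S : Set E) (p : ZMod 2) (m : ℕ) : Submodule ℝ (E → F) where
  carrier := {f | HasNormalParity ν S p m f}
  zero_mem' :=
    ⟨contDiff_const, fun j _ _ x _ => by
      simpa using congrFun (iterate_dirDeriv_const_smul (v := ν) j 0 (0 : E → F)) x⟩
  add_mem' {f g} hf hg :=
    ⟨hf.contDiff.add hg.contDiff, fun j hj hjp x hx => by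
      have hjm : (j : WithTop ℕ∞) ≤ m := mod_cast hj
      simp [iterate_dirDeriv_add (hf.contDiff.of_le hjm) (hg.contDiff.of_le hjm),
        hf.iterate_eqOn_zero j hj hjp hx, hg.iterate_eqOn_zero j hj hjp hx]⟩
  smul_mem' c f hf :=
    ⟨hf.contDiff.const_smul c, fun j hj hjp x hx => by
      simp [iterate_dirDeriv_const_smul, hf.iterate_eqOn_zero j hj hjp hx]⟩

theorem add {f g : E → F} (hf : HasNormalParity ν S p m f) (hg : HasNormalParity ν S p m g) :
    HasNormalParity ν S p m (f + g) :=
  (submodule ν S p m).add_mem hf hg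

theorem sub {f g : E → F} (hf : HasNormalParity ν S p m f) (hg : HasNormalParity ν S p m g) :
    HasNormalParity ν S p m (f - g) :=
  show f - g ∈ submodule ν S p m from sub_mem hf hg

theorem neg (hf : HasNormalParity ν S p m f) : HasNormalParity ν S p m (-f) :=
  show -f ∈ submodule ν S p m from neg_mem hf

theorem sum {ι : Type*} {s : Finset ι} {f : ι → E → F}
    (hf : ∀ i ∈ s, HasNormalParity ν S p m (f i)) : HasNormalParity ν S p m (∑ i ∈ s, f i) :=
  (submodule ν S p m).sum_mem hf

theorem zero_iff : HasNormalParity ν S p 0 f ↔ Continuous f ∧ (p ≠ 0 → Set.EqOn f 0 S) := by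
  constructor
  · exact fun h => ⟨h.contDiff.continuous, fun hp => h.iterate_eqOn_zero 0 le_rfl hp.symm⟩
  · rintro ⟨hf, h⟩
    refine ⟨contDiff_zero.2 hf, fun j hj hjp => ?_⟩
    obtain rfl := Nat.le_zero.1 hj
    exact h hjp.symm

theorem succ_iff : HasNormalParity ν S p (m + 1) f ↔
    ContDiff ℝ (m + 1) f ∧ (p ≠ 0 → Set.EqOn f 0 S) ∧
      HasNormalParity ν S (p + 1) m (dirDeriv ν f) := by
  have parity_shift (j : ℕ) : ((j + 1 : ℕ) : ZMod 2) = p ↔ (j : ZMod 2) = p + 1 := by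
    rw [Nat.cast_succ, ← CharTwo.sub_eq_add p, eq_sub_iff_add_eq]
  constructor
  · intro h
    refine ⟨mod_cast h.contDiff, fun hp => h.iterate_eqOn_zero 0 (Nat.zero_le _) hp.symm,
      contDiff_dirDeriv (mod_cast h.contDiff), fun j hj hjp => ?_⟩
    exact h.iterate_eqOn_zero (j + 1) (by lia) (mt (parity_shift j).1 hjp)
  · rintro ⟨hf, h0, h⟩
    refine ⟨mod_cast hf, ?_⟩
    rintro (_ | j) hj hjp
    · exact h0 hjp.symm
    · exact h.iterate_eqOn_zero j (by lia) (mt (parity_shift j).2 hjp)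

theorem mono {n : ℕ} (h : HasNormalParity ν S p n f) (hmn : m ≤ n) : HasNormalParity ν S p m f :=
  ⟨h.contDiff.of_le (mod_cast hmn), fun j hj => h.iterate_eqOn_zero j (hj.trans hmn)⟩

theorem eqOn_zero (h : HasNormalParity ν S p m f) (hp : p ≠ 0) : Set.EqOn f 0 S :=
  h.iterate_eqOn_zero 0 m.zero_le hp.symm

/-- Derivatives of the right parity are unconstrained. -/
theorem succ_of_parity (h : HasNormalParity ν S p m f) (hf : ContDiff ℝ (m + 1) f)
    (hm : (m + 1 : ZMod 2) = p) : HasNormalParity ν S p (m + 1) f := by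
  refine ⟨mod_cast hf, fun j hj hjp => ?_⟩
  rcases Nat.le_succ_iff.1 hj with hjm | rfl
  · exact h.iterate_eqOn_zero j hjm hjp
  · exact absurd (mod_cast hm) hjp

theorem even_one (hf : ContDiff ℝ 1 f) (h : Set.EqOn (dirDeriv ν f) 0 S) :
    HasNormalParity ν S 0 1 f :=
  succ_iff.2 ⟨by simpa using hf, fun h0 => absurd rfl h0,
    zero_iff.2 ⟨(contDiff_dirDeriv (n := 0) (by simpa using hf)).continuous, fun _ => h⟩⟩

theorem odd_one (hf : ContDiff ℝ 1 f) (h : Set.EqOn f 0 S) : HasNormalParity ν S 1 1 f :=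
  (zero_iff.2 ⟨hf.continuous, fun _ => h⟩).succ_of_parity (by simpa using hf) (by simp)

theorem dirDeriv_normal (h : HasNormalParity ν S p (m + 1) f) :
    HasNormalParity ν S (p + 1) m (dirDeriv ν f) :=
  (succ_iff.1 h).2.2

theorem dirDeriv_tangential {v : E} (hv : InvariantAlong S v) (hf : ContDiff ℝ (m + 1) f)
    (h : HasNormalParity ν S p m f) : HasNormalParity ν S p m (dirDeriv v f) := by
  induction m generalizing p f with
  | zero =>
    refine zero_iff.2 ⟨(contDiff_dirDeriv (n := 0) (by simpa using hf)).continuous, fun hp => ?_⟩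
    exact hv.eqOn_dirDeriv_zero (hf.differentiable (by simp)) (h.eqOn_zero hp)
  | succ m ih =>
    rw [Nat.cast_succ] at hf
    refine succ_iff.2 ⟨contDiff_dirDeriv hf, fun hp => ?_, ?_⟩
    · exact hv.eqOn_dirDeriv_zero (hf.differentiable (by simp)) (h.eqOn_zero hp)
    · rw [dirDeriv_comm (hf.of_le (by norm_cast; lia)) ν v]
      exact ih (contDiff_dirDeriv hf) h.dirDeriv_normal

theorem mul_eqOn_zero {f g : E → A} (hf : HasNormalParity ν S p m f)
    (hg : HasNormalParity ν S q m g) (hpq : p + q ≠ 0) : Set.EqOn (f * g) 0 S := by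
  intro x hx
  rcases ne_or_eq p 0 with hp | rfl
  · simp [hf.eqOn_zero hp hx]
  · simp [hg.eqOn_zero (by simpa using hpq) hx]

theorem mul {f g : E → A} (hf : HasNormalParity ν S p m f) (hg : HasNormalParity ν S q m g) :
    HasNormalParity ν S (p + q) m (f * g) := by
  induction m generalizing p q f g with
  | zero =>
    exact zero_iff.2 ⟨hf.contDiff.continuous.mul hg.contDiff.continuous, hf.mul_eqOn_zero hg⟩
  | succ m ih =>
    refine succ_iff.2 ⟨mod_cast hf.contDiff.mul hg.contDiff, hf.mul_eqOn_zero hg, ?_⟩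
    rw [dirDeriv_mul (hf.contDiff.differentiable (by simp)) (hg.contDiff.differentiable (by simp))]
    have deriv_mul := ih hf.dirDeriv_normal (hg.mono m.le_succ)
    have mul_deriv := ih (hf.mono m.le_succ) hg.dirDeriv_normal
    rw [add_right_comm] at deriv_mul
    rw [← add_assoc] at mul_deriv
    exact deriv_mul.add mul_deriv

end HasNormalParity

end NormalParity

section Laplacian

variable {k : Fin 3} {S : Set V3} {p q : ZMod 2} {m : ℕ} {f : V3 → ℝ} {u V : V3 → V3}

theorem contDiff_pd {n : WithTop ℕ∞} (hf : ContDiff ℝ (n + 1) f) (i : Fin 3) :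
    ContDiff ℝ n (pd i f) :=
  contDiff_dirDeriv hf

theorem contDiff_vcurl {n : WithTop ℕ∞} (hu : ContDiff ℝ (n + 1) u) : ContDiff ℝ n (vcurl u) := by
  have pd_component (i j : Fin 3) : ContDiff ℝ n (pd i fun y => u y j) :=
    contDiff_pd (contDiff_pi.1 hu j) i
  refine contDiff_pi.2 fun i => ?_
  fin_cases i <;> exact (pd_component _ _).sub (pd_component _ _)

namespace HasNormalParity

theorem pd_tangential (hS : ∀ i ≠ k, InvariantAlong S (Pi.single i 1)) {i : Fin 3} (hi : i ≠ k)
    (hf : ContDiff ℝ (m + 1) f) (h : HasNormalParity (Pi.single k 1) S p m f) :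
    HasNormalParity (Pi.single k 1) S p m (pd i f) :=
  h.dirDeriv_tangential (hS i hi) hf

theorem pd (hS : ∀ i ≠ k, InvariantAlong S (Pi.single i 1))
    (h : HasNormalParity (Pi.single k 1) S p (m + 1) f) (i : Fin 3) :
    HasNormalParity (Pi.single k 1) S (p + if i = k then 1 else 0) m (pd i f) := by
  split_ifs with hik
  · exact hik ▸ h.dirDeriv_normal
  · rw [add_zero]
    exact (h.mono m.le_succ).pd_tangential hS hik (mod_cast h.contDiff)

end HasNormalParity

theorem lap_eq_sum (f : V3 → ℝ) : lap f = ∑ i, pd i (pd i f) := by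
  ext x
  simp [lap, Fin.sum_univ_three]

theorem vdiv_eq_sum (V : V3 → V3) : vdiv V = ∑ i, pd i (fun y => V y i) := by
  ext x
  simp [vdiv, Fin.sum_univ_three]

theorem adv_apply_eq_sum (u V : V3 → V3) (i : Fin 3) :
    (fun y => adv u V y i) = ∑ j, (fun y => u y j) * pd j (fun y => V y i) := by
  ext x
  simp [adv, Fin.sum_univ_three]

namespace HasNormalParity

theorem lap (hS : ∀ i ≠ k, InvariantAlong S (Pi.single i 1))
    (h : HasNormalParity (Pi.single k 1) S p (m + 2) f) :
    HasNormalParity (Pi.single k 1) S p m (lap f) := by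
  rw [lap_eq_sum]
  refine sum fun i _ => ?_
  have h2 := (h.pd hS i).pd hS i
  rwa [add_assoc, CharTwo.add_self_eq_zero, add_zero] at h2

/-- The tangential second derivatives inherit the parity of `f`, so the Laplacian controls the
normal one. -/
theorem of_lap (hS : ∀ i ≠ k, InvariantAlong S (Pi.single i 1)) (hf : ContDiff ℝ (m + 2) f)
    (h : HasNormalParity (Pi.single k 1) S p (m + 1) f)
    (hlap : HasNormalParity (Pi.single k 1) S p m (_root_.lap f)) :
    HasNormalParity (Pi.single k 1) S p (m + 2) f := by
  have hf1 : ContDiff ℝ ((m + 1 : ℕ) + 1) f := by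
    simpa [add_assoc, one_add_one_eq_two] using hf
  have tangential (i : Fin 3) (hi : i ≠ k) :
      HasNormalParity (Pi.single k 1) S p m (_root_.pd i (_root_.pd i f)) :=
    ((h.pd_tangential hS hi hf1).mono m.le_succ).pd_tangential hS hi
      (mod_cast contDiff_pd hf1 i)
  have normal : HasNormalParity (Pi.single k 1) S p m (_root_.pd k (_root_.pd k f)) := by
    have hlap_eq := lap_eq_sum f
    rw [← Finset.add_sum_erase _ _ (Finset.mem_univ k)] at hlap_eq
    rw [eq_sub_of_add_eq hlap_eq.symm]
    exact hlap.sub (sum fun i hi => tangential i (Finset.ne_of_mem_erase hi))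
  obtain ⟨-, eqOn_f, h'⟩ := succ_iff.1 h
  refine succ_iff.2 ⟨hf1, eqOn_f, succ_iff.2
    ⟨mod_cast contDiff_pd hf1 k, h'.eqOn_zero, ?_⟩⟩
  rwa [add_assoc, CharTwo.add_self_eq_zero, add_zero]

theorem odd_two_of_lap_eq_zero (hS : ∀ i ≠ k, InvariantAlong S (Pi.single i 1))
    (hf : ContDiff ℝ 2 f) (h : Set.EqOn f 0 S) (hlap : Set.EqOn (_root_.lap f) 0 S) :
    HasNormalParity (Pi.single k 1) S 1 2 f := by
  have pd_pd_contDiff (i : Fin 3) : ContDiff ℝ 0 (_root_.pd i (_root_.pd i f)) :=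
    contDiff_pd (contDiff_pd (by simpa [one_add_one_eq_two] using hf) i) i
  have lap_continuous : Continuous (_root_.lap f) :=
    (((pd_pd_contDiff 0).add (pd_pd_contDiff 1)).add (pd_pd_contDiff 2)).continuous
  exact of_lap hS (by simpa using hf) (odd_one (hf.of_le one_le_two) h)
    (zero_iff.2 ⟨lap_continuous, fun _ => hlap⟩)

theorem normal_of_vdiv_eq_zero (hS : ∀ i ≠ k, InvariantAlong S (Pi.single i 1))
    (hV : ContDiff ℝ (m + 1) V) (hdiv : ∀ x, vdiv V x = 0)
    (tangential : ∀ i ≠ k, HasNormalParity (Pi.single k 1) S p m fun y => V y i)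
    (hk : p + 1 ≠ 0 → Set.EqOn (fun y => V y k) 0 S) :
    HasNormalParity (Pi.single k 1) S (p + 1) (m + 1) fun y => V y k := by
  have hVi := contDiff_pi.1 hV
  have div_eq : ∑ i, _root_.pd i (fun y => V y i) = 0 := by
    rw [← vdiv_eq_sum]
    exact funext hdiv
  rw [← Finset.add_sum_erase _ _ (Finset.mem_univ k)] at div_eq
  have normal_deriv : HasNormalParity (Pi.single k 1) S p m (_root_.pd k fun y => V y k) := by
    rw [eq_neg_of_add_eq_zero_left div_eq]
    refine neg (sum fun i hi => ?_)
    have hik := Finset.ne_of_mem_erase hi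
    exact (tangential i hik).pd_tangential hS hik (hVi i)
  refine succ_iff.2 ⟨hVi k, hk, ?_⟩
  rwa [add_assoc, CharTwo.add_self_eq_zero, add_zero]

end HasNormalParity

/-- The vector-field version of `HasNormalParity`: reflection reverses the normal component, so a
field of parity `p` has tangential components of parity `p` and a normal component of parity
`p + 1`. Here `k` is the normal coordinate. -/
def HasReflectionParity (k : Fin 3) (S : Set V3) (p : ZMod 2) (m : ℕ) (V : V3 → V3) : Prop :=
  ∀ i, HasNormalParity (Pi.single k 1) S (p + if i = k then 1 else 0) m fun y => V y i

namespace HasReflectionParity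

theorem mono {n : ℕ} (h : HasReflectionParity k S p n V) (hmn : m ≤ n) :
    HasReflectionParity k S p m V :=
  fun i => (h i).mono hmn

theorem sub (hu : HasReflectionParity k S p m u) (hV : HasReflectionParity k S p m V) :
    HasReflectionParity k S p m fun y => u y - V y :=
  fun i => (hu i).sub (hV i)

theorem adv (hS : ∀ i ≠ k, InvariantAlong S (Pi.single i 1)) (hu : HasReflectionParity k S p m u)
    (hV : HasReflectionParity k S q (m + 1) V) : HasReflectionParity k S (p + q) m (adv u V) := by
  intro i
  rw [adv_apply_eq_sum]
  refine HasNormalParity.sum fun j _ => ?_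
  have summand := (hu j).mul ((hV i).pd hS j)
  have reflections_cancel (a b : ZMod 2) : p + a + (q + b + a) = p + q + b := by
    linear_combination a * CharTwo.two_eq_zero (R := ZMod 2)
  rwa [reflections_cancel] at summand

theorem vlap_eq_zero (hS : ∀ i ≠ k, InvariantAlong S (Pi.single i 1))
    (hV : HasReflectionParity k S 1 2 V) {x : V3} (hx : x ∈ S) {i : Fin 3} (hi : i ≠ k) :
    vlap V x i = 0 := by
  have odd : HasNormalParity (Pi.single k 1) S 1 2 fun y => V y i := by simpa [hi] using hV i
  exact (odd.lap hS).eqOn_zero one_ne_zero hx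

end HasReflectionParity

end Laplacian

section BoundaryConditions

variable {S : Set V3} {u B : V3 → V3}

theorem normal_odd_of_navierSlip (hS : ∀ i ≠ 2, InvariantAlong S (Pi.single i 1))
    (hu : ContDiff ℝ 2 u) (hdiv : ∀ x, vdiv u x = 0)
    (hbc : ∀ x ∈ S, u x 2 = 0 ∧ pd 2 (fun y => u y 0) x = 0 ∧ pd 2 (fun y => u y 1) x = 0) :
    HasNormalParity (Pi.single 2 1) S 1 2 fun y => u y 2 := by
  have tangential_even (i : Fin 3) (hi : i ≠ 2) :
      HasNormalParity (Pi.single 2 1) S 0 1 fun y => u y i := by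
    refine .even_one (contDiff_pi.1 (hu.of_le one_le_two) i) fun x hx => ?_
    fin_cases i
    exacts [(hbc x hx).2.1, (hbc x hx).2.2, absurd rfl hi]
  exact .normal_of_vdiv_eq_zero (p := 0) (m := 1) hS
    (by simpa [one_add_one_eq_two] using hu) hdiv tangential_even fun _ x hx => (hbc x hx).1

theorem vcurl_odd_of_navierSlip (hS : ∀ i ≠ 2, InvariantAlong S (Pi.single i 1))
    (hu : ContDiff ℝ 3 u) (hdiv : ∀ x, vdiv u x = 0)
    (hbc : ∀ x ∈ S, u x 2 = 0 ∧ pd 2 (fun y => u y 0) x = 0 ∧ pd 2 (fun y => u y 1) x = 0)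
    (hlap : ∀ x ∈ S, vlap (vcurl u) x 0 = 0 ∧ vlap (vcurl u) x 1 = 0) {i : Fin 3} (hi : i ≠ 2) :
    HasNormalParity (Pi.single 2 1) S 1 2 fun y => vcurl u y i := by
  have normal_odd := normal_odd_of_navierSlip hS (hu.of_le (by norm_num)) hdiv hbc
  have curl_contDiff : ContDiff ℝ 2 (vcurl u) := contDiff_vcurl hu
  refine .odd_two_of_lap_eq_zero hS (contDiff_pi.1 curl_contDiff i) (fun x hx => ?_)
    fun x hx => ?_
  · have pd_normal_eq_zero (j : Fin 3) (hj : j ≠ 2) : pd j (fun y => u y 2) x = 0 :=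
      (normal_odd.pd_tangential hS hj (contDiff_pi.1 hu 2)).eqOn_zero one_ne_zero hx
    fin_cases i
    · simp [vcurl, pd_normal_eq_zero 1, hbc x hx]
    · simp [vcurl, pd_normal_eq_zero 0, hbc x hx]
    · exact absurd rfl hi
  · fin_cases i
    exacts [(hlap x hx).1, (hlap x hx).2, absurd rfl hi]

theorem hasReflectionParity_of_navierSlip (hS : ∀ i ≠ 2, InvariantAlong S (Pi.single i 1))
    (hu : ContDiff ℝ 3 u) (hdiv : ∀ x, vdiv u x = 0)
    (hbc : ∀ x ∈ S, u x 2 = 0 ∧ pd 2 (fun y => u y 0) x = 0 ∧ pd 2 (fun y => u y 1) x = 0)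
    (hlap : ∀ x ∈ S, vlap (vcurl u) x 0 = 0 ∧ vlap (vcurl u) x 1 = 0) :
    HasReflectionParity 2 S 0 3 u := by
  have hui (i : Fin 3) : ContDiff ℝ 3 fun y => u y i := contDiff_pi.1 hu i
  have normal_odd := normal_odd_of_navierSlip hS (hu.of_le (by norm_num)) hdiv hbc
  have pd_normal_odd {i : Fin 3} (hi : i ≠ 2) :
      HasNormalParity (Pi.single 2 1) S 1 2 (pd i fun y => u y 2) :=
    normal_odd.pd_tangential hS hi (hui 2)
  have curl_odd {i : Fin 3} (hi : i ≠ 2) :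
      HasNormalParity (Pi.single 2 1) S 1 2 fun y => vcurl u y i :=
    vcurl_odd_of_navierSlip hS hu hdiv hbc hlap hi
  have pd_two_odd (i : Fin 3) (hi : i ≠ 2) :
      HasNormalParity (Pi.single 2 1) S 1 2 (pd 2 fun y => u y i) := by
    fin_cases i
    · convert (curl_odd (i := 1) (by decide)).add (pd_normal_odd (i := 0) (by decide)) using 1
      ext x
      simp [vcurl]
    · convert (pd_normal_odd (i := 1) (by decide)).sub (curl_odd (i := 0) (by decide)) using 1
      ext x
      simp [vcurl]
    · exact absurd rfl hi
  intro i
  rcases eq_or_ne i 2 with rfl | hi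
  · exact normal_odd.succ_of_parity (hui 2) (by decide)
  · rw [if_neg hi]
    exact HasNormalParity.succ_iff.2 ⟨hui i, fun h0 => absurd (add_zero 0) h0, pd_two_odd i hi⟩

theorem hasReflectionParity_of_insulating (hS : ∀ i ≠ 2, InvariantAlong S (Pi.single i 1))
    (hB : ContDiff ℝ 3 B) (hdiv : ∀ x, vdiv B x = 0) (hbc : ∀ x ∈ S, B x 0 = 0 ∧ B x 1 = 0)
    (hlap : ∀ x ∈ S, vlap B x 0 = 0 ∧ vlap B x 1 = 0) :
    HasReflectionParity 2 S 1 3 B := by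
  have hBi (i : Fin 3) : ContDiff ℝ 3 fun y => B y i := contDiff_pi.1 hB i
  have tangential_odd (i : Fin 3) (hi : i ≠ 2) :
      HasNormalParity (Pi.single 2 1) S 1 2 fun y => B y i := by
    refine .odd_two_of_lap_eq_zero hS ((hBi i).of_le (by norm_num)) (fun x hx => ?_) fun x hx => ?_
    all_goals fin_cases i
    exacts [(hbc x hx).1, (hbc x hx).2, absurd rfl hi, (hlap x hx).1, (hlap x hx).2, absurd rfl hi]
  intro i
  rcases eq_or_ne i 2 with rfl | hi
  · exact .normal_of_vdiv_eq_zero hS hB hdiv tangential_odd fun h0 => absurd (by decide) h0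
  · rw [if_neg hi, add_zero]
    exact (tangential_odd i hi).succ_of_parity (hBi i) (by decide)

end BoundaryConditions

theorem invariantAlong_onBdry {i : Fin 3} (hi : i ≠ 2) :
    InvariantAlong {x | onBdry x} (Pi.single i 1) := by
  intro x hx t
  simpa [onBdry, Pi.single_apply, hi.symm] using hx

theorem stmt_3_general (S : Set V3) (hS : ∀ i ≠ 2, InvariantAlong S (Pi.single i 1))
    (u B : V3 → V3) (hu : ContDiff ℝ 3 u) (hB : ContDiff ℝ 3 B)
    (hdivu : ∀ x, vdiv u x = 0) (hdivB : ∀ x, vdiv B x = 0)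
    (hubc : ∀ x ∈ S, u x 2 = 0 ∧ pd 2 (fun y => u y 0) x = 0 ∧ pd 2 (fun y => u y 1) x = 0)
    (hBbc : ∀ x ∈ S, B x 0 = 0 ∧ B x 1 = 0)
    (hlapB : ∀ x ∈ S, vlap B x 0 = 0 ∧ vlap B x 1 = 0)
    (hlapcurlu : ∀ x ∈ S, vlap (vcurl u) x 0 = 0 ∧ vlap (vcurl u) x 1 = 0) :
    ∀ x ∈ S, vlap (fun y => adv u B y - adv B u y) x 0 = 0 ∧
      vlap (fun y => adv u B y - adv B u y) x 1 = 0 := by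
  have parity_u : HasReflectionParity 2 S 0 3 u :=
    hasReflectionParity_of_navierSlip hS hu hdivu hubc hlapcurlu
  have parity_B : HasReflectionParity 2 S 1 3 B :=
    hasReflectionParity_of_insulating hS hB hdivB hBbc hlapB
  have parity_uB : HasReflectionParity 2 S 1 2 (adv u B) :=
    (parity_u.mono (by lia)).adv hS parity_B
  have parity_Bu : HasReflectionParity 2 S 1 2 (adv B u) :=
    (parity_B.mono (by lia)).adv hS parity_u
  intro x hx
  exact ⟨(parity_uB.sub parity_Bu).vlap_eq_zero hS hx (by decide),
    (parity_uB.sub parity_Bu).vlap_eq_zero hS hx (by decide)⟩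

/-- Lemma 5.3: under the Navier-slip b.c. for `u`, the insulating b.c. for `B`,
`ΔB × n = 0` and `Δ(curl u) × n = 0` on `∂Ω`, one has `(curl)³(B × u) × n = 0` on `∂Ω`;
explicitly, the first and second components of `Δ((u·∇)B − (B·∇)u)` vanish on `∂Ω`. -/
theorem stmt_3 (u B : V3 → V3)
    (hu : ContDiff ℝ (⊤ : ℕ∞) u) (hB : ContDiff ℝ (⊤ : ℕ∞) B)
    (hdivu : ∀ x, vdiv u x = 0) (hdivB : ∀ x, vdiv B x = 0)
    (hubc : ∀ x, onBdry x →
      u x 2 = 0 ∧ pd 2 (fun y => u y 0) x = 0 ∧ pd 2 (fun y => u y 1) x = 0)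
    (hBbc : ∀ x, onBdry x → B x 0 = 0 ∧ B x 1 = 0)
    (hlapB : ∀ x, onBdry x → vlap B x 0 = 0 ∧ vlap B x 1 = 0)
    (hlapcurlu : ∀ x, onBdry x →
      vlap (vcurl u) x 0 = 0 ∧ vlap (vcurl u) x 1 = 0) :
    ∀ x, onBdry x →
      vlap (fun y => adv u B y - adv B u y) x 0 = 0 ∧
      vlap (fun y => adv u B y - adv B u y) x 1 = 0 :=
  stmt_3_general {x | onBdry x} (fun _ => invariantAlong_onBdry) u B
    (hu.of_le (WithTop.coe_le_coe.2 le_top)) (hB.of_le (WithTop.coe_le_coe.2 le_top))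
    hdivu hdivB hubc hBbc hlapB hlapcurlu
end
end

section
/- Let B : ℝ³ → ℝ³ be a smooth vector field such that (ΔB)₁ = (ΔB)₂ = 0 at every point of ∂Ω. Then (curl)³B · n = 0 on ∂Ω; that is, the third component of curl(curl(curl B)) vanishes at every point of ∂Ω. -/
noncomputable section

open MeasureTheory

/-!
Since `curl curl = grad div - Δ` and `curl grad = 0`, we have `curl curl curl B = -curl ΔB`.
The normal component of `curl ΔB` on a horizontal plane only involves tangential derivatives of
the tangential components of `ΔB`, and these components vanish on the plane.
-/

open Filter Topology

section PartialDerivative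

variable {f g : V3 → ℝ} {x : V3} {i j : Fin 3}

theorem pd_congr (h : f =ᶠ[𝓝 x] g) : pd i f x = pd i g x := by
  rw [pd, pd, h.fderiv_eq]

theorem pd_add (hf : DifferentiableAt ℝ f x) (hg : DifferentiableAt ℝ g x) :
    pd i (fun y => f y + g y) x = pd i f x + pd i g x := by
  simp only [pd, fderiv_fun_add hf hg, add_apply]

theorem pd_sub (hf : DifferentiableAt ℝ f x) (hg : DifferentiableAt ℝ g x) :
    pd i (fun y => f y - g y) x = pd i f x - pd i g x := by
  simp only [pd, fderiv_fun_sub hf hg, sub_apply]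

theorem contDiffAt_pd {m n : WithTop ℕ∞} (hf : ContDiffAt ℝ n f x) (hmn : m + 1 ≤ n) :
    ContDiffAt ℝ m (pd i f) x :=
  (hf.fderiv_right hmn).clm_apply contDiffAt_const

theorem differentiableAt_pd (hf : ContDiffAt ℝ 2 f x) : DifferentiableAt ℝ (pd i f) x :=
  (contDiffAt_pd (m := 1) hf (by norm_num)).differentiableAt one_ne_zero

theorem pd_pd (hf : ContDiffAt ℝ 2 f x) :
    pd i (pd j f) x = fderiv ℝ (fderiv ℝ f) x (Pi.single i 1) (Pi.single j 1) := by
  have hdf : DifferentiableAt ℝ (fderiv ℝ f) x :=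
    (hf.fderiv_right (m := 1) (by norm_num)).differentiableAt one_ne_zero
  change fderiv ℝ (fun y => fderiv ℝ f y (Pi.single j 1)) x (Pi.single i 1) = _
  simp [fderiv_clm_apply hdf (differentiableAt_const _)]

theorem pd_comm (hf : ContDiffAt ℝ 2 f x) : pd i (pd j f) x = pd j (pd i f) x := by
  rw [pd_pd hf, pd_pd hf]
  exact hf.isSymmSndFDerivAt (by simp) _ _

theorem pd_eq_zero_of_eventually_const_on_hyperplane {c : ℝ} (hij : i ≠ j)
    (hf : DifferentiableAt ℝ f x) (hc : ∀ᶠ y in 𝓝[{y | y j = x j}] x, f y = c) :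
    pd i f x = 0 := by
  let line : ℝ → V3 := fun t => x + t • Pi.single i 1
  have line_mem (t : ℝ) : line t ∈ {y | y j = x j} := by simp [line, hij.symm]
  have line_tendsto : Tendsto line (𝓝 0) (𝓝[{y | y j = x j}] x) :=
    tendsto_nhdsWithin_iff.2
      ⟨(show Continuous line by fun_prop).tendsto' 0 x (by simp [line]), .of_forall line_mem⟩
  have const_on_line : (fun t => f (line t)) =ᶠ[𝓝 0] fun _ => c := line_tendsto.eventually hc
  rw [pd, ← hf.lineDeriv_eq_fderiv, lineDeriv, const_on_line.deriv_eq, deriv_const]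

end PartialDerivative

section VectorCalculus

variable {f : V3 → ℝ} {u v : V3 → V3} {x : V3} {m n : WithTop ℕ∞}

theorem contDiffAt_vdiv (hu : ContDiffAt ℝ n u x) (hmn : m + 1 ≤ n) :
    ContDiffAt ℝ m (vdiv u) x :=
  have hpd (i : Fin 3) : ContDiffAt ℝ m (pd i fun y => u y i) x :=
    contDiffAt_pd (contDiffAt_pi.1 hu i) hmn
  ((hpd 0).add (hpd 1)).add (hpd 2)

theorem contDiffAt_lap (hf : ContDiffAt ℝ n f x) (hmn : m + 2 ≤ n) :
    ContDiffAt ℝ m (lap f) x :=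
  have hpd (i : Fin 3) : ContDiffAt ℝ m (pd i (pd i f)) x :=
    contDiffAt_pd (contDiffAt_pd hf (by rwa [add_assoc, one_add_one_eq_two])) le_rfl
  ((hpd 0).add (hpd 1)).add (hpd 2)

theorem contDiffAt_vlap (hu : ContDiffAt ℝ n u x) (hmn : m + 2 ≤ n) :
    ContDiffAt ℝ m (vlap u) x :=
  contDiffAt_pi.2 fun i => contDiffAt_lap (contDiffAt_pi.1 hu i) hmn

theorem pd_vdiv (hu : ContDiffAt ℝ 2 u x) (i : Fin 3) :
    pd i (vdiv u) x =
      pd i (pd 0 fun y => u y 0) x + pd i (pd 1 fun y => u y 1) x +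
        pd i (pd 2 fun y => u y 2) x := by
  have hd (k : Fin 3) : DifferentiableAt ℝ (pd k fun y => u y k) x :=
    differentiableAt_pd (contDiffAt_pi.1 hu k)
  change pd i (fun y => pd 0 (fun z => u z 0) y + pd 1 (fun z => u z 1) y +
    pd 2 (fun z => u z 2) y) x = _
  rw [pd_add ((hd 0).fun_add (hd 1)) (hd 2), pd_add (hd 0) (hd 1)]

theorem vcurl_congr (h : u =ᶠ[𝓝 x] v) : vcurl u x = vcurl v x := by
  have hpd (i k : Fin 3) : pd i (fun y => u y k) x = pd i (fun y => v y k) x :=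
    pd_congr (h.fun_comp (· k))
  simp only [vcurl, hpd]

theorem vcurl_sub (hu : DifferentiableAt ℝ u x) (hv : DifferentiableAt ℝ v x) :
    vcurl (fun y => u y - v y) x = vcurl u x - vcurl v x := by
  have hpd (i k : Fin 3) :
      pd i (fun y => u y k - v y k) x = pd i (fun y => u y k) x - pd i (fun y => v y k) x :=
    pd_sub (differentiableAt_pi.1 hu k) (differentiableAt_pi.1 hv k)
  ext i
  fin_cases i <;>
    simp only [Fin.zero_eta, Fin.mk_one, Fin.reduceFinMk, Matrix.cons_val, Pi.sub_apply,
      vcurl, hpd] <;>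
    ring

theorem vcurl_grad (hf : ContDiffAt ℝ 2 f x) : vcurl (grad f) x = 0 := by
  have hcurl (i j : Fin 3) : pd i (pd j f) x - pd j (pd i f) x = 0 := sub_eq_zero.2 (pd_comm hf)
  ext i
  fin_cases i <;> exact hcurl _ _

theorem vcurl_vcurl (hu : ContDiffAt ℝ 2 u x) :
    vcurl (vcurl u) x = grad (vdiv u) x - vlap u x := by
  have hpd_sub (i j k l m : Fin 3) :
      pd i (fun y => pd j (fun z => u z k) y - pd l (fun z => u z m) y) x =
        pd i (pd j fun z => u z k) x - pd i (pd l fun z => u z m) x :=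
    pd_sub (differentiableAt_pd (contDiffAt_pi.1 hu k)) (differentiableAt_pd (contDiffAt_pi.1 hu m))
  have hcomm (i j k : Fin 3) :
      pd i (pd j fun y => u y k) x = pd j (pd i fun y => u y k) x :=
    pd_comm (contDiffAt_pi.1 hu k)
  ext i
  fin_cases i <;>
    simp only [Fin.zero_eta, Fin.mk_one, Fin.reduceFinMk, Matrix.cons_val, Pi.sub_apply,
      vcurl, grad, vlap, lap, pd_vdiv hu, hpd_sub]
  · linear_combination hcomm 1 0 1 + hcomm 2 0 2
  · linear_combination hcomm 0 1 0 + hcomm 2 1 2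
  · linear_combination hcomm 0 2 0 + hcomm 1 2 1

theorem vcurl_vcurl_vcurl (hu : ContDiffAt ℝ 3 u x) :
    vcurl (vcurl (vcurl u)) x = -vcurl (vlap u) x := by
  have hu_near : ∀ᶠ y in 𝓝 x, ContDiffAt ℝ 3 u y := hu.eventually (by simp)
  have hcurl_curl : vcurl (vcurl u) =ᶠ[𝓝 x] fun y => grad (vdiv u) y - vlap u y :=
    hu_near.mono fun y hy => vcurl_vcurl (hy.of_le (by norm_num))
  have hdiv : ContDiffAt ℝ 2 (vdiv u) x := contDiffAt_vdiv hu (by norm_num)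
  have hgrad_div : DifferentiableAt ℝ (grad (vdiv u)) x :=
    differentiableAt_pi.2 fun _ => differentiableAt_pd hdiv
  have hlap : DifferentiableAt ℝ (vlap u) x :=
    (contDiffAt_vlap (m := 1) hu (by norm_num)).differentiableAt one_ne_zero
  rw [vcurl_congr hcurl_curl, vcurl_sub hgrad_div hlap, vcurl_grad hdiv, zero_sub]

theorem vcurl_two_eq_zero_of_tangential_eq_zero (hu : DifferentiableAt ℝ u x)
    (htan : ∀ᶠ y in 𝓝[{y | y 2 = x 2}] x, u y 0 = 0 ∧ u y 1 = 0) : vcurl u x 2 = 0 := by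
  have h0 : pd 1 (fun y => u y 0) x = 0 :=
    pd_eq_zero_of_eventually_const_on_hyperplane (by decide) (differentiableAt_pi.1 hu 0)
      (htan.mono fun _ => And.left)
  have h1 : pd 0 (fun y => u y 1) x = 0 :=
    pd_eq_zero_of_eventually_const_on_hyperplane (by decide) (differentiableAt_pi.1 hu 1)
      (htan.mono fun _ => And.right)
  change pd 0 (fun y => u y 1) x - pd 1 (fun y => u y 0) x = 0
  rw [h0, h1, sub_zero]

end VectorCalculus

theorem stmt_6_general {B : V3 → V3} {x : V3} (hB : ContDiffAt ℝ 3 B x)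
    (hlapB : ∀ᶠ y in 𝓝[{y | y 2 = x 2}] x, vlap B y 0 = 0 ∧ vlap B y 1 = 0) :
    vcurl (vcurl (vcurl B)) x 2 = 0 := by
  have hlap : DifferentiableAt ℝ (vlap B) x :=
    (contDiffAt_vlap (m := 1) hB (by norm_num)).differentiableAt one_ne_zero
  rw [vcurl_vcurl_vcurl hB, Pi.neg_apply, vcurl_two_eq_zero_of_tangential_eq_zero hlap hlapB,
    neg_zero]

/-- If `(ΔB)₁ = (ΔB)₂ = 0` on `∂Ω`, then `(curl)³B · n = 0` on `∂Ω`, i.e. the third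
component of `curl(curl(curl B))` vanishes on `∂Ω`. -/
theorem stmt_6 (B : V3 → V3)
    (hB : ContDiff ℝ (⊤ : ℕ∞) B)
    (hlapB : ∀ x, onBdry x → vlap B x 0 = 0 ∧ vlap B x 1 = 0) :
    ∀ x, onBdry x → vcurl (vcurl (vcurl B)) x 2 = 0 := by
  intro x hx
  exact stmt_6_general (contDiff_infty.1 hB 3).contDiffAt
    (eventually_mem_nhdsWithin.mono fun y (hy : y 2 = x 2) => hlapB y (by rwa [onBdry, hy]))
end
end
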